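/- Let d ≥ 1, 2 ≤ p < ∞, and k₂ ∈ ℝ. Suppose there exists a constant C > 0 such that ‖(1−Δ)^{k₂/2}(ℱf)‖_{L^p(ℝ^d)} ≤ C·‖f‖_{L^p(ℝ^d)} for every Schwartz function f on ℝ^d whose Fourier transform ℱf is supported in the closed unit ball {|ξ| ≤ 1}. Then k₂ ≤ −2d(1/2 − 1/p). -/

import Mathlib

open MeasureTheory Complex Real
open scoped ENNReal RealInnerProductSpace

noncomputable section

abbrev E (d : ℕ) : Type := EuclideanSpace ℝ (Fin d)

/-- The Fourier transform `ℱu(ξ) = ∫ exp(-i x·ξ) u(x) dx`. -/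
def FT (d : ℕ) (u : E d → ℂ) (ξ : E d) : ℂ :=
  ∫ x, Complex.exp (-Complex.I * (⟪x, ξ⟫ : ℂ)) * u x

/-- The Bessel potential `(1-Δ)^{k/2} u = ℱ⁻¹((1+|ξ|²)^{k/2} ℱu)`. -/
def bessel (d : ℕ) (k : ℝ) (u : E d → ℂ) (x : E d) : ℂ :=
  (((2 * π) ^ d : ℝ) : ℂ)⁻¹ *
    ∫ ξ, Complex.exp (Complex.I * (⟪x, ξ⟫ : ℂ)) * (((1 + ‖ξ‖ ^ 2) ^ (k / 2) : ℝ) : ℂ) *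
      FT d u ξ

open scoped FourierTransform SchwartzMap ContDiff
open Filter

theorem FT_eq_fourier (d : ℕ) (u : E d → ℂ) (ξ : E d) :
    FT d u ξ = 𝓕 u ((2 * π)⁻¹ • ξ) := by
  rw [FT, Real.fourier_eq']
  refine integral_congr_ae (.of_forall fun x => ?_)
  have : -2 * π * ⟪x, (2 * π)⁻¹ • ξ⟫ = -⟪x, ξ⟫ := by
    rw [inner_smul_right]; field_simp
  simp only [this, smul_eq_mul]
  congr 2
  push_cast
  ring

theorem FT_FT_eq_fourier_fourier (d : ℕ) (u : E d → ℂ) (ξ : E d) :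
    FT d (FT d u) ξ = ((2 * π) ^ d : ℝ) * 𝓕 (𝓕 u) ξ := by
  have hpi : (0 : ℝ) ≤ 2 * π := by positivity
  have key := Measure.integral_comp_inv_smul_of_nonneg (volume : Measure (E d))
    (fun x => Complex.exp (-Complex.I * (⟪(2 * π) • x, ξ⟫ : ℝ)) * 𝓕 u x) hpi
  simp only [finrank_euclideanSpace, Fintype.card_fin] at key
  rw [FT, Real.fourier_eq', ← Complex.real_smul]
  convert key using 2
  · ext x
    rw [FT_eq_fourier, smul_inv_smul₀ (by positivity)]
  · refine integral_congr_ae (.of_forall fun x => ?_)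
    simp only [inner_smul_left, smul_eq_mul]
    congr 2
    push_cast
    simp
    ring

/-- The Schwartz function `x ↦ (1 + ‖x‖²)^{k/2} g(x)`. -/
def weightMul (d : ℕ) (k : ℝ) (g : 𝓢(E d, ℂ)) : 𝓢(E d, ℂ) :=
  SchwartzMap.smulLeftCLM ℂ (fun x : E d => (1 + ‖x‖ ^ 2) ^ (k / 2)) g

theorem weightMul_apply (d : ℕ) (k : ℝ) (g : 𝓢(E d, ℂ)) (x : E d) :
    weightMul d k g x = ((1 + ‖x‖ ^ 2) ^ (k / 2) : ℝ) * g x := by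
  rw [weightMul, SchwartzMap.smulLeftCLM_apply_apply
    (Function.hasTemperateGrowth_one_add_norm_sq_rpow (E d) (k / 2)), Complex.real_smul]

theorem bessel_FT_eq (d : ℕ) (k : ℝ) (f : 𝓢(E d, ℂ)) (x : E d) :
    bessel d k (FT d f) x = (𝓕⁻ (weightMul d k (𝓕 (𝓕 f)))) ((2 * π)⁻¹ • x) := by
  have h0 : (((2 * π) ^ d : ℝ) : ℂ) ≠ 0 := by
    exact_mod_cast (by positivity : ((2 * π) ^ d : ℝ) ≠ 0)
  rw [bessel, SchwartzMap.fourierInv_coe, Real.fourierInv_eq', ← integral_const_mul]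
  refine integral_congr_ae (.of_forall fun ξ => ?_)
  have : 2 * π * ⟪ξ, (2 * π)⁻¹ • x⟫ = ⟪x, ξ⟫ := by
    rw [inner_smul_right, real_inner_comm]; field_simp
  simp only [this, weightMul_apply, FT_FT_eq_fourier_fourier, smul_eq_mul, SchwartzMap.fourier_coe]
  rw [mul_comm (Complex.I)]
  field_simp

theorem integral_bessel_FT_norm_rpow (d : ℕ) (k p : ℝ) (f : 𝓢(E d, ℂ)) :
    ∫ x, ‖bessel d k (FT d f) x‖ ^ p =
      (2 * π) ^ d * ∫ x, ‖(𝓕⁻ (weightMul d k (𝓕 (𝓕 f)))) x‖ ^ p := by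
  simp only [bessel_FT_eq]
  rw [Measure.integral_comp_inv_smul_of_nonneg (volume : Measure (E d))
    (fun x => ‖(𝓕⁻ (weightMul d k (𝓕 (𝓕 f))) : 𝓢(E d, ℂ)) x‖ ^ p) (by positivity)]
  simp

theorem integral_weight_mul_norm_sq_fourier_le (d : ℕ) (k : ℝ) {p q : ℝ}
    (hpq : p.HolderConjugate q) (u : 𝓢(E d, ℂ)) :
    ∫ ξ, (1 + ‖ξ‖ ^ 2) ^ (k / 2) * ‖(𝓕 u) ξ‖ ^ 2 ≤
      (∫ x, ‖(𝓕⁻ (weightMul d k (𝓕 u))) x‖ ^ p) ^ (1 / p) * (∫ x, ‖u x‖ ^ q) ^ (1 / q) := by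
  set T := 𝓕⁻ (weightMul d k (𝓕 u)) with hT
  have hFT : 𝓕 T = weightMul d k (𝓕 u) := by simp [hT]
  have h1 : ((∫ ξ, (1 + ‖ξ‖ ^ 2) ^ (k / 2) * ‖(𝓕 u) ξ‖ ^ 2 : ℝ) : ℂ) =
      ∫ x, inner ℂ (u x) (T x) := by
    rw [← SchwartzMap.integral_inner_fourier_fourier, hFT, ← integral_complex_ofReal]
    refine integral_congr_ae (.of_forall fun ξ => ?_)
    simp only [weightMul_apply]
    rw [← Complex.real_smul, inner_smul_right_eq_smul, inner_self_eq_norm_sq_to_K]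
    simp
  calc _ ≤ ‖((∫ ξ, (1 + ‖ξ‖ ^ 2) ^ (k / 2) * ‖(𝓕 u) ξ‖ ^ 2 : ℝ) : ℂ)‖ := by
        rw [Complex.norm_real]; exact le_abs_self _
    _ ≤ ∫ x, ‖inner ℂ (u x) (T x)‖ := by rw [h1]; exact norm_integral_le_integral_norm _
    _ ≤ ∫ x, ‖T x‖ * ‖u x‖ := by
        refine integral_mono_of_nonneg (.of_forall fun x => norm_nonneg _) ?_
          (.of_forall fun x => ?_)
        · exact (T.memLp 2).norm.integrable_mul (u.memLp 2).norm
        · exact (norm_inner_le_norm _ _).trans_eq (mul_comm _ _)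
    _ ≤ _ := integral_mul_norm_le_Lp_mul_Lq hpq (T.memLp _) (u.memLp _)

/-- The dilation `x ↦ b (r • x)` of a Schwartz function. -/
def dilate (d : ℕ) (r : ℝ) (hr : r ≠ 0) (b : 𝓢(E d, ℂ)) : 𝓢(E d, ℂ) :=
  SchwartzMap.compCLMOfContinuousLinearEquiv ℂ
    (ContinuousLinearEquiv.smulLeft (Units.mk0 r hr) : E d ≃L[ℝ] E d) b

theorem dilate_apply (d : ℕ) (r : ℝ) (hr : r ≠ 0) (b : 𝓢(E d, ℂ)) (x : E d) :
    dilate d r hr b x = b (r • x) := rfl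

theorem fourier_dilate (d : ℕ) {r : ℝ} (hr : 0 < r) (b : 𝓢(E d, ℂ)) (ξ : E d) :
    (𝓕 (dilate d r hr.ne' b)) ξ = (((r ^ d)⁻¹ : ℝ) : ℂ) * (𝓕 b) (r⁻¹ • ξ) := by
  have key := Measure.integral_comp_smul_of_nonneg (volume : Measure (E d))
    (fun x => Complex.exp ((↑(-2 * π * ⟪x, r⁻¹ • ξ⟫) * Complex.I)) • b x) r (hR := hr.le)
  simp only [finrank_euclideanSpace, Fintype.card_fin] at key
  rw [SchwartzMap.fourier_coe, SchwartzMap.fourier_coe, Real.fourier_eq', Real.fourier_eq',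
    ← Complex.real_smul, ← key]
  refine integral_congr_ae (.of_forall fun x => ?_)
  have : ⟪r • x, r⁻¹ • ξ⟫ = ⟪x, ξ⟫ := by
    rw [inner_smul_left, inner_smul_right]
    simp [hr.ne']
  simp only [dilate_apply, this]

theorem integral_norm_rpow_dilate (d : ℕ) {r : ℝ} (hr : 0 < r) (q : ℝ) (b : 𝓢(E d, ℂ)) :
    ∫ x, ‖dilate d r hr.ne' b x‖ ^ q = (r ^ d)⁻¹ * ∫ x, ‖b x‖ ^ q := by
  simp only [dilate_apply]
  rw [Measure.integral_comp_smul_of_nonneg (volume : Measure (E d)) (fun x => ‖b x‖ ^ q) r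
    (hR := hr.le)]
  simp

theorem integral_norm_rpow_fourierInv_dilate (d : ℕ) {r : ℝ} (hr : 0 < r) (p : ℝ)
    (b : 𝓢(E d, ℂ)) :
    ∫ x, ‖(𝓕⁻ (dilate d r hr.ne' b)) x‖ ^ p =
      ((r ^ d)⁻¹) ^ p * (r ^ d * ∫ x, ‖(𝓕 b) x‖ ^ p) := by
  have h1 : ∀ x, (𝓕⁻ (dilate d r hr.ne' b)) x = (𝓕 (dilate d r hr.ne' b)) (-x) := fun x => by
    rw [SchwartzMap.fourierInv_coe, SchwartzMap.fourier_coe, Real.fourierInv_eq_fourier_neg]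
  simp only [h1]
  rw [integral_neg_eq_self (fun x => ‖(𝓕 (dilate d r hr.ne' b) : 𝓢(E d, ℂ)) x‖ ^ p) volume]
  have h2 : ∀ x, ‖(𝓕 (dilate d r hr.ne' b)) x‖ ^ p =
      ((r ^ d)⁻¹) ^ p * ‖(𝓕 b) (r⁻¹ • x)‖ ^ p := fun x => by
    rw [fourier_dilate d hr, norm_mul, Complex.norm_real, Real.norm_of_nonneg (by positivity),
      Real.mul_rpow (by positivity) (norm_nonneg _)]
  simp only [h2]
  rw [integral_const_mul, Measure.integral_comp_inv_smul_of_nonneg (volume : Measure (E d))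
    (fun x => ‖(𝓕 b : 𝓢(E d, ℂ)) x‖ ^ p) hr.le]
  simp

theorem integral_weight_mul_norm_sq_fourier_dilate (d : ℕ) {r : ℝ} (hr : 0 < r) (k : ℝ)
    (b : 𝓢(E d, ℂ)) :
    ∫ ξ, (1 + ‖ξ‖ ^ 2) ^ (k / 2) * ‖(𝓕 (dilate d r hr.ne' b)) ξ‖ ^ 2 =
      (r ^ d)⁻¹ * ∫ ξ, (1 + ‖r • ξ‖ ^ 2) ^ (k / 2) * ‖(𝓕 b) ξ‖ ^ 2 := by
  have h2 : ∀ x, (1 + ‖x‖ ^ 2) ^ (k / 2) * ‖(𝓕 (dilate d r hr.ne' b)) x‖ ^ 2 =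
      ((r ^ d)⁻¹) ^ 2 * ((1 + ‖r • r⁻¹ • x‖ ^ 2) ^ (k / 2) * ‖(𝓕 b) (r⁻¹ • x)‖ ^ 2) := fun x => by
    rw [fourier_dilate d hr, norm_mul, Complex.norm_real, Real.norm_of_nonneg (by positivity),
      smul_inv_smul₀ hr.ne']
    ring
  simp only [h2]
  rw [integral_const_mul, Measure.integral_comp_inv_smul_of_nonneg (volume : Measure (E d))
    (fun ξ => (1 + ‖r • ξ‖ ^ 2) ^ (k / 2) * ‖(𝓕 b : 𝓢(E d, ℂ)) ξ‖ ^ 2) hr.le]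
  simp only [finrank_euclideanSpace, Fintype.card_fin, smul_eq_mul]
  field_simp

theorem integrable_weight_mul_norm_sq (d : ℕ) (k r : ℝ) (g : 𝓢(E d, ℂ)) :
    Integrable fun ξ : E d => (1 + ‖r • ξ‖ ^ 2) ^ (k / 2) * ‖g ξ‖ ^ 2 := by
  have ht : (fun x : E d => (1 + ‖r • x‖ ^ 2) ^ (k / 2)).HasTemperateGrowth :=
    (Function.hasTemperateGrowth_one_add_norm_sq_rpow (E d) (k / 2)).comp
      (r • ContinuousLinearMap.id ℝ (E d)).hasTemperateGrowth
  have h := ((SchwartzMap.smulLeftCLM ℂ (fun x : E d => (1 + ‖r • x‖ ^ 2) ^ (k / 2)) g).memLp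
    2).norm.integrable_mul (g.memLp 2).norm
  refine h.congr (.of_forall fun ξ => ?_)
  simp only [Pi.mul_apply]
  rw [SchwartzMap.smulLeftCLM_apply_apply ht, norm_smul, Real.norm_of_nonneg (by positivity)]
  ring

/-- A weight which, up to the factor `r ^ k`, bounds the dilated Bessel weights from below. -/
theorem exists_weight_lower_bound (d : ℕ) (k : ℝ) :
    ∃ v : E d → ℝ, Continuous v ∧ (∀ ξ, 0 ≤ v ξ) ∧ (∀ ξ, ξ ≠ 0 → 0 < v ξ) ∧
      ∀ r : ℝ, 1 ≤ r → ∀ ξ, r ^ k * v ξ ≤ (1 + ‖r • ξ‖ ^ 2) ^ (k / 2) := by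
  have hsq : ∀ x : ℝ, 0 ≤ x → x ^ k = (x ^ 2) ^ (k / 2) := fun x hx => by
    rw [← Real.rpow_natCast x 2, ← Real.rpow_mul hx]
    congr 1
    push_cast
    ring
  rcases le_total 0 k with hk | hk
  · refine ⟨fun ξ => ‖ξ‖ ^ k, continuous_norm.rpow_const fun _ => .inr hk, fun ξ => by positivity,
      fun ξ hξ => Real.rpow_pos_of_pos (norm_pos_iff.2 hξ) _, fun r hr ξ => ?_⟩
    rw [← Real.mul_rpow (by linarith) (norm_nonneg _), norm_smul, Real.norm_of_nonneg (by linarith),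
      hsq _ (by positivity)]
    exact Real.rpow_le_rpow (by positivity) (by linarith) (by linarith)
  · refine ⟨fun ξ => (1 + ‖ξ‖ ^ 2) ^ (k / 2), ?_, fun ξ => by positivity, fun ξ _ => by positivity,
      fun r hr ξ => ?_⟩
    · exact (by fun_prop : Continuous fun ξ : E d => 1 + ‖ξ‖ ^ 2).rpow_const
        fun ξ => .inl (by positivity)
    · rw [hsq r (by linarith), ← Real.mul_rpow (by positivity) (by positivity)]
      refine Real.rpow_le_rpow_of_nonpos (by positivity) ?_ (by linarith)
      rw [norm_smul, Real.norm_of_nonneg (by linarith)]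
      nlinarith

theorem exists_pos_rpow_mul_le_integral_weight (d : ℕ) (hd : 1 ≤ d) (k : ℝ) (g : 𝓢(E d, ℂ))
    (hg : g 0 ≠ 0) :
    ∃ c > 0, ∀ r : ℝ, 1 ≤ r →
      r ^ k * c ≤ ∫ ξ, (1 + ‖r • ξ‖ ^ 2) ^ (k / 2) * ‖g ξ‖ ^ 2 := by
  obtain ⟨v, hvc, hv0, hvpos, hv⟩ := exists_weight_lower_bound d k
  have hint : Integrable fun ξ => v ξ * ‖g ξ‖ ^ 2 := by
    refine (integrable_weight_mul_norm_sq d k 1 g).mono' (by fun_prop) (.of_forall fun ξ => ?_)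
    have := hv 1 le_rfl ξ
    rw [Real.one_rpow, one_mul] at this
    rw [Real.norm_of_nonneg (mul_nonneg (hv0 ξ) (by positivity))]
    gcongr
  have : NeZero d := ⟨by omega⟩
  have : Nontrivial (E d) := inferInstance
  obtain ⟨ξ, hξ0, hξ⟩ : ∃ ξ : E d, ξ ≠ 0 ∧ g ξ ≠ 0 := by
    have h1 : ∀ᶠ ξ in nhdsWithin (0 : E d) {0}ᶜ, g ξ ≠ 0 :=
      (g.continuous.continuousAt.eventually_ne hg).filter_mono nhdsWithin_le_nhds
    exact (h1.and self_mem_nhdsWithin).exists.imp fun ξ h => ⟨h.2, h.1⟩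
  refine ⟨∫ ξ, v ξ * ‖g ξ‖ ^ 2, ?_, fun r hr => ?_⟩
  · refine integral_pos_of_integrable_nonneg_nonzero (x := ξ) (by fun_prop) hint
      (fun x => mul_nonneg (hv0 x) (by positivity)) ?_
    exact (mul_pos (hvpos ξ hξ0) (by positivity)).ne'
  · rw [← integral_const_mul]
    refine integral_mono (hint.const_mul _) (integrable_weight_mul_norm_sq d k r g) fun ξ => ?_
    simp only
    rw [← mul_assoc]
    exact mul_le_mul_of_nonneg_right (hv r hr ξ) (by positivity)

theorem exists_schwartz_support_subset_fourier_zero_ne_zero (d : ℕ) {ρ : ℝ} (hρ : 0 < ρ) :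
    ∃ b : 𝓢(E d, ℂ), Function.support b ⊆ Metric.closedBall 0 ρ ∧ (𝓕 b) 0 ≠ 0 := by
  let β : ContDiffBump (0 : E d) := ⟨ρ / 2, ρ, by positivity, by linarith⟩
  have hs : HasCompactSupport fun x => (β x : ℂ) :=
    β.hasCompactSupport.comp_left (g := Complex.ofReal) Complex.ofReal_zero
  have hβ : ContDiff ℝ ∞ β := β.contDiff
  have hc : ContDiff ℝ ∞ fun x => (β x : ℂ) := Complex.ofRealCLM.contDiff.comp hβ
  refine ⟨hs.toSchwartzMap hc, fun x hx => ?_, ?_⟩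
  · have : x ∈ Function.support β := by simpa using hx
    rw [β.support_eq] at this
    exact Metric.ball_subset_closedBall this
  · rw [SchwartzMap.fourier_coe, Real.fourier_eq']
    simp only [inner_zero_right, mul_zero, Complex.ofReal_zero, zero_mul, Complex.exp_zero,
      one_smul, HasCompactSupport.toSchwartzMap_toFun]
    change ∫ x, (β x : ℂ) ≠ 0
    rw [integral_complex_ofReal]
    exact_mod_cast β.integral_pos.ne'

theorem le_of_forall_rpow_mul_le {c K s t : ℝ} (hc : 0 < c)
    (h : ∀ r : ℝ, 1 ≤ r → r ^ s * c ≤ K * r ^ t) : s ≤ t := by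
  by_contra! hst
  obtain ⟨r, hr, hr1⟩ := (((tendsto_rpow_atTop (sub_pos.2 hst)).eventually_gt_atTop (K / c)).and
    (eventually_ge_atTop 1)).exists
  have h0 : 0 < r := by linarith
  have h1 := h r hr1
  rw [Real.rpow_sub h0, div_lt_div_iff₀ hc (by positivity)] at hr
  linarith

theorem rpow_scaling_identity {r A B p q : ℝ} (d : ℕ) (hr : 0 < r) (hA : 0 ≤ A) (hB : 0 ≤ B)
    (hp : 0 < p) (hq : 1 / q = 1 - 1 / p) (K : ℝ) :
    r ^ d * (K * (((r ^ d)⁻¹) ^ p * (r ^ d * A)) ^ (1 / p) * ((r ^ d)⁻¹ * B) ^ (1 / q)) =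
      (K * A ^ (1 / p) * B ^ (1 / q)) * r ^ (-(2 * d * (1 / 2 - 1 / p))) := by
  have hR : (0 : ℝ) < r ^ d := by positivity
  have hexp : (r ^ d) ^ (1 / p) * ((r ^ d)⁻¹) ^ (1 / q) = r ^ (-(2 * d * (1 / 2 - 1 / p))) := by
    rw [Real.inv_rpow hR.le, ← Real.rpow_neg hR.le, ← Real.rpow_add hR, ← Real.rpow_natCast,
      ← Real.rpow_mul hr.le, hq]
    congr 1
    ring
  rw [← hexp, Real.mul_rpow (by positivity) (by positivity), Real.mul_rpow hR.le hA,
    Real.mul_rpow (by positivity) hB, ← Real.rpow_mul (by positivity), mul_one_div_cancel hp.ne',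
    Real.rpow_one]
  field_simp

/-- necessity of the loss for `2 ≤ p < ∞`: if
`‖(1-Δ)^{k₂/2}(ℱf)‖_{L^p} ≤ C·‖f‖_{L^p}` for all Schwartz `f` with `ℱf` supported
in the closed unit ball, then `k₂ ≤ -2d(1/2 - 1/p)`. -/
theorem stmt18 (d : ℕ) (hd : 1 ≤ d) (p : ℝ) (hp : 2 ≤ p) (k₂ : ℝ)
    (h : ∃ C > (0 : ℝ), ∀ f : SchwartzMap (E d) ℂ,
      Function.support (FT d (⇑f)) ⊆ Metric.closedBall (0 : E d) 1 →
      (∫ x : E d, ‖bessel d k₂ (FT d (⇑f)) x‖ ^ p) ^ (1 / p) ≤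
        C * (∫ x : E d, ‖f x‖ ^ p) ^ (1 / p)) :
    k₂ ≤ -(2 * d * (1 / 2 - 1 / p)) := by
  obtain ⟨C, hC, h⟩ := h
  have hp0 : 0 < p := by linarith
  have hpq : p.HolderConjugate (p.conjExponent) :=
    Real.HolderConjugate.conjExponent (by linarith)
  set q := p.conjExponent with hq
  have hq0 : 0 < q := hpq.symm.pos
  have hq1 : 1 / q = 1 - 1 / p := by
    have := hpq.inv_add_inv_eq_one
    rw [one_div, one_div]; linarith
  obtain ⟨b, hb, hb0⟩ := exists_schwartz_support_subset_fourier_zero_ne_zero d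
    (ρ := (2 * π)⁻¹) (by positivity)
  obtain ⟨c, hc, hcb⟩ := exists_pos_rpow_mul_le_integral_weight d hd k₂ (𝓕 b) hb0
  set A := ∫ x, ‖(𝓕 b) x‖ ^ p with hA
  set B := ∫ x, ‖b x‖ ^ q with hB
  have hA0 : 0 ≤ A := integral_nonneg fun x => by positivity
  have hB0 : 0 ≤ B := integral_nonneg fun x => by positivity
  set M := ((2 * π) ^ d : ℝ) ^ (1 / p) with hM
  have hM0 : 0 < M := by positivity
  have main : ∀ r : ℝ, 1 ≤ r → r ^ k₂ * c ≤
      (M⁻¹ * C * A ^ (1 / p) * B ^ (1 / q)) * r ^ (-(2 * d * (1 / 2 - 1 / p))) := by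
    intro r hr
    have hr0 : 0 < r := by linarith
    set u := dilate d r hr0.ne' b with hu
    have hsupp : Function.support (FT d (𝓕⁻ u : 𝓢(E d, ℂ))) ⊆ Metric.closedBall (0 : E d) 1 := by
      intro ξ hξ
      rw [Function.mem_support, FT_eq_fourier, ← SchwartzMap.fourier_coe,
        FourierTransform.fourier_fourierInv_eq, hu, dilate_apply] at hξ
      have h1 := hb hξ
      rw [mem_closedBall_zero_iff, norm_smul, norm_smul, Real.norm_of_nonneg hr0.le,
        Real.norm_of_nonneg (by positivity)] at h1
      rw [mem_closedBall_zero_iff]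
      have h2 : (2 * π)⁻¹ * (r * ‖ξ‖) ≤ (2 * π)⁻¹ * 1 := by linarith
      have h3 := le_of_mul_le_mul_left h2 (by positivity)
      nlinarith [norm_nonneg ξ]
    have h1 := h _ hsupp
    rw [integral_bessel_FT_norm_rpow, FourierTransform.fourier_fourierInv_eq,
      Real.mul_rpow (by positivity) (integral_nonneg fun x => by positivity), ← hM,
      integral_norm_rpow_fourierInv_dilate d hr0] at h1
    have h2 := integral_weight_mul_norm_sq_fourier_le d k₂ hpq u
    rw [integral_weight_mul_norm_sq_fourier_dilate d hr0, integral_norm_rpow_dilate d hr0] at h2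
    have h3 := hcb r hr
    set N := (∫ x, ‖(𝓕⁻ (weightMul d k₂ (𝓕 u))) x‖ ^ p) ^ (1 / p) with hN
    have hR : (0 : ℝ) < r ^ d := by positivity
    have hN1 : N ≤ M⁻¹ * C * (((r ^ d)⁻¹) ^ p * (r ^ d * A)) ^ (1 / p) := by
      rw [mul_assoc, inv_mul_eq_div, le_div_iff₀ hM0, mul_comm]
      exact h1
    have hB' : 0 ≤ ((r ^ d)⁻¹ * B) ^ (1 / q) :=
      Real.rpow_nonneg (mul_nonneg (inv_nonneg.2 hR.le) hB0) _
    rw [← rpow_scaling_identity d hr0 hA0 hB0 hp0 hq1]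
    rw [inv_mul_le_iff₀ hR] at h2
    exact h3.trans (h2.trans (mul_le_mul_of_nonneg_left
      (mul_le_mul_of_nonneg_right hN1 hB') hR.le))
  exact le_of_forall_rpow_mul_le hc main
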